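/- Let f : ℝ → ℝ be infinitely differentiable. Then for every natural number n and every x ∈ ℝ, the n-th derivative of x ↦ exp(f(x)) satisfies: iteratedDeriv n (fun y => exp (f y)) x = exp(f(x)) · ∑_{k : weight(k) = n} ( n! / (k! · (s!)^k) ) · ∏_i (f^{(i)}(x))^{k_i}, where the sum ranges over all finitely supported k : ℕ →₀ ℕ with k 0 = 0 and weight(k) = n, and f^{(i)} denotes the i-th iterated derivative of f. -/

import Mathlib

open Real Finsupp

/-- The weight of a finitely supported `k : ℕ →₀ ℕ`: `∑ i, i * k i`. -/
def wt (k : ℕ →₀ ℕ) : ℕ := k.sum fun i m => i * m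

lemma mul_le_wt (k : ℕ →₀ ℕ) (i : ℕ) : i * k i ≤ wt k := by
  by_cases h : i ∈ k.support
  · exact Finset.single_le_sum (f := fun i => i * k i) (fun _ _ => Nat.zero_le _) h
  · simp [Finsupp.notMem_support_iff.mp h]

lemma support_subset_range_wt (k : ℕ →₀ ℕ) : k.support ⊆ Finset.range (wt k + 1) := by
  intro i hi
  have h1 : 0 < k i := Nat.pos_of_ne_zero (Finsupp.mem_support_iff.mp hi)
  exact Finset.mem_range.mpr
    (Nat.lt_succ_of_le ((Nat.le_mul_of_pos_right i h1).trans (mul_le_wt k i)))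

lemma wt_add_single (k : ℕ →₀ ℕ) (i : ℕ) : wt (k + single i 1) = wt k + i := by
  unfold wt
  rw [Finsupp.sum_add_index' (by simp) (by intros; ring)]
  simp

lemma wt_eq_sum_range (k : ℕ →₀ ℕ) (n : ℕ) (h : wt k = n + 1) :
    wt k = ∑ i ∈ Finset.range (n + 1), (i + 1) * k (i + 1) := by
  have hs := support_subset_range_wt k
  rw [h] at hs
  rw [wt, Finsupp.sum_of_support_subset k hs _ (by simp), Finset.sum_range_succ']
  simp

lemma finite_wt_eq (n : ℕ) : {k : ℕ →₀ ℕ | k 0 = 0 ∧ wt k = n}.Finite := by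
  refine ((Finset.range (n + 1)).finsupp fun _ => Finset.range (n + 1)).finite_toSet.subset ?_
  rintro k ⟨h0, rfl⟩
  refine Finset.mem_finsupp_iff.mpr ⟨support_subset_range_wt k, fun i _ => ?_⟩
  rw [Finset.mem_range, Nat.lt_succ_iff]
  rcases Nat.eq_zero_or_pos i with rfl | hi
  · simp [h0]
  · exact (Nat.le_mul_of_pos_left _ hi).trans (mul_le_wt k i)

/-- The multi-indices of weight `n` supported on the positive integers. -/
noncomputable def weightIndices (n : ℕ) : Finset (ℕ →₀ ℕ) := (finite_wt_eq n).toFinset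

lemma mem_weightIndices {n : ℕ} {k : ℕ →₀ ℕ} :
    k ∈ weightIndices n ↔ k 0 = 0 ∧ wt k = n := by
  simp [weightIndices]

/-- The monomial `∏ i, a i ^ k i / (k i)! / (i !) ^ k i`. -/
noncomputable def bellTerm (a : ℕ → ℝ) (k : ℕ →₀ ℕ) : ℝ :=
  k.prod fun i m => a i ^ m / (m.factorial * (i.factorial : ℝ) ^ m)

lemma bellTerm_add_single (a : ℕ → ℝ) (k : ℕ →₀ ℕ) (i : ℕ) :
    ((k i : ℝ) + 1) * bellTerm a (k + single i 1) = a i / i.factorial * bellTerm a k := by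
  unfold bellTerm
  rw [← Finsupp.mul_prod_erase' k i _ (by simp),
    ← Finsupp.mul_prod_erase' (k + single i 1) i _ (by simp)]
  have he : (k + single i 1).erase i = k.erase i := by
    ext j
    by_cases hj : j = i
    · simp [hj]
    · simp [Finsupp.erase_ne hj]
  rw [he]
  have h1 : (i.factorial : ℝ) ≠ 0 := by positivity
  have h2 : ((k i).factorial : ℝ) ≠ 0 := by positivity
  have h3 : (k i : ℝ) + 1 ≠ 0 := by positivity
  simp only [Finsupp.add_apply, Finsupp.single_eq_same, Nat.factorial_succ, Nat.cast_mul,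
    Nat.cast_add, Nat.cast_one, pow_succ]
  field_simp

lemma sum_mul_bellTerm (a : ℕ → ℝ) {n i : ℕ} (hi : i ≤ n) :
    ∑ k ∈ weightIndices (n + 1), (k (i + 1) : ℝ) * bellTerm a k =
      a (i + 1) / (i + 1).factorial * ∑ k ∈ weightIndices (n - i), bellTerm a k := by
  rw [Finset.mul_sum]
  symm
  refine Finset.sum_of_injOn (fun k => k + single (i + 1) 1) ?_ ?_ ?_ ?_
  · exact fun _ _ _ _ h => add_right_cancel h
  · intro k hk
    obtain ⟨h0, hw⟩ := mem_weightIndices.mp hk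
    refine mem_weightIndices.mpr ⟨by simp [h0], ?_⟩
    rw [wt_add_single]
    omega
  · intro k hk hk'
    obtain ⟨h0, hw⟩ := mem_weightIndices.mp hk
    by_cases hz : k (i + 1) = 0
    · simp [hz]
    · have hs : single (i + 1) 1 ≤ k := by
        rw [Finsupp.single_le_iff]
        omega
      have hk2 : k - single (i + 1) 1 + single (i + 1) 1 = k := tsub_add_cancel_of_le hs
      refine absurd ⟨k - single (i + 1) 1, mem_weightIndices.mpr ⟨by simp [h0], ?_⟩, hk2⟩ hk'
      have := wt_add_single (k - single (i + 1) 1) (i + 1)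
      rw [hk2] at this
      omega
  · intro k _
    rw [← bellTerm_add_single]
    simp

/-- The complete Bell polynomial of degree `n` evaluated at `a`. -/
noncomputable def completeBell (a : ℕ → ℝ) (n : ℕ) : ℝ :=
  n.factorial * ∑ k ∈ weightIndices n, bellTerm a k

lemma completeBell_zero (a : ℕ → ℝ) : completeBell a 0 = 1 := by
  have h : weightIndices 0 = {0} := by
    ext k
    rw [mem_weightIndices, Finset.mem_singleton]
    constructor
    · rintro ⟨h0, hw⟩
      ext i
      rcases Nat.eq_zero_or_pos i with rfl | hi
      · exact h0
      · have := mul_le_wt k i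
        rw [hw] at this
        simpa [hi.ne'] using this
    · rintro rfl
      simp [wt]
  simp [completeBell, h, bellTerm]

lemma completeBell_succ (a : ℕ → ℝ) (n : ℕ) :
    completeBell a (n + 1) =
      ∑ i ∈ Finset.range (n + 1), (n.choose i : ℝ) * a (i + 1) * completeBell a (n - i) := by
  have key : ((n + 1 : ℕ) : ℝ) * ∑ k ∈ weightIndices (n + 1), bellTerm a k =
      ∑ i ∈ Finset.range (n + 1), ((i + 1 : ℕ) : ℝ) *
        ∑ k ∈ weightIndices (n + 1), (k (i + 1) : ℝ) * bellTerm a k := by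
    simp_rw [Finset.mul_sum]
    rw [Finset.sum_comm]
    refine Finset.sum_congr rfl fun k hk => ?_
    obtain ⟨-, hw⟩ := mem_weightIndices.mp hk
    have hn : ((n + 1 : ℕ) : ℝ) = ∑ i ∈ Finset.range (n + 1), ((i + 1 : ℕ) : ℝ) * k (i + 1) := by
      exact_mod_cast hw.symm.trans (wt_eq_sum_range k n hw)
    rw [hn, Finset.sum_mul]
    exact Finset.sum_congr rfl fun i _ => mul_assoc _ _ _
  rw [completeBell, Nat.factorial_succ, Nat.cast_mul, mul_comm ((n + 1 : ℕ) : ℝ), mul_assoc, key,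
    Finset.mul_sum]
  refine Finset.sum_congr rfl fun i hi => ?_
  have hin : i ≤ n := Nat.lt_succ_iff.mp (Finset.mem_range.mp hi)
  have h1 : (i.factorial : ℝ) ≠ 0 := by positivity
  have h3 : (i : ℝ) + 1 ≠ 0 := by positivity
  rw [sum_mul_bellTerm a hin, completeBell, ← Nat.choose_mul_factorial_mul_factorial hin,
    Nat.factorial_succ]
  push_cast
  field_simp

lemma iteratedDeriv_exp_comp_eq_completeBell (f : ℝ → ℝ) (hf : ContDiff ℝ (⊤ : ℕ∞) f)
    (n : ℕ) (x : ℝ) :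
    iteratedDeriv n (fun y => Real.exp (f y)) x =
      Real.exp (f x) * completeBell (fun i => iteratedDeriv i f x) n := by
  induction n using Nat.strong_induction_on with
  | _ n ih =>
    rcases n with _ | n
    · simp [completeBell_zero]
    have hd : deriv (fun y => Real.exp (f y)) = deriv f * fun y => Real.exp (f y) := by
      ext y
      rw [deriv_exp (hf.differentiable (by simp) y), Pi.mul_apply, mul_comm]
    have hf' : ContDiff ℝ n (deriv f) :=
      ((contDiff_succ_iff_deriv (n := n)).mp (hf.of_le (by exact_mod_cast le_top))).2.2
    have hg : ContDiff ℝ n fun y => Real.exp (f y) := (hf.of_le (by exact_mod_cast le_top)).exp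
    rw [iteratedDeriv_succ', hd, iteratedDeriv_mul hf'.contDiffAt hg.contDiffAt,
      completeBell_succ, Finset.mul_sum]
    refine Finset.sum_congr rfl fun i _ => ?_
    rw [ih (n - i) (by omega), ← iteratedDeriv_succ']
    ring

theorem deriv_exp_comp_closed_formula
    (f : ℝ → ℝ) (hf : ContDiff ℝ (⊤ : ℕ∞) f) (n : ℕ) (x : ℝ) :
    iteratedDeriv n (fun y => Real.exp (f y)) x =
      Real.exp (f x) *
        ∑ᶠ (k : ℕ →₀ ℕ) (_ : k 0 = 0 ∧ wt k = n),
          ((n.factorial : ℝ) /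
              ((k.prod fun _ m => (m.factorial : ℝ)) *
                (k.prod fun i m => (i.factorial : ℝ) ^ m))) *
            k.prod fun i m => (iteratedDeriv i f x) ^ m := by
  rw [iteratedDeriv_exp_comp_eq_completeBell f hf, completeBell, Finset.mul_sum]
  congr 1
  refine Eq.trans ?_ (finsum_mem_eq_finite_toFinset_sum _ (finite_wt_eq n)).symm
  refine Finset.sum_congr rfl fun k _ => ?_
  simp only [bellTerm, Finsupp.prod, Finset.prod_div_distrib, Finset.prod_mul_distrib]
  ring
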